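/- With the setup of the context, let τ' ∈ 𝔸_q satisfy τ' ≠ ϑ and suppose there exist F', α' ∈ 𝔸_q with F∘F' = F'∘F = 1 + α'∘τ' and H̃ = F'∘G + τ'. Then the Hamming weight ‖ρ(τ')‖_H is strictly greater than 4·|T|. -/

import Mathlib

noncomputable section

open MvPolynomial Quaternion

/-- The ring `R'_q = (ℤ/qℤ)[x,y]/⟨x^n - 1, y^n - 1⟩`. -/
abbrev Rq (q n : ℕ) : Type :=
  MvPolynomial (Fin 2) (ZMod q) ⧸
    (Ideal.span {(X 0 : MvPolynomial (Fin 2) (ZMod q)) ^ n - 1, (X 1 : MvPolynomial (Fin 2) (ZMod q)) ^ n - 1})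

/-- Evaluation `ev_{a,b} : R'_q → ℤ/qℤ` at a point `(a,b)` with `a^n = b^n = 1`. -/
def ev (q n : ℕ) (a b : ZMod q) (ha : a ^ n = 1) (hb : b ^ n = 1) :
    Rq q n →+* ZMod q :=
  Ideal.Quotient.lift _ (MvPolynomial.eval ![a, b])
    (by
      intro f hf
      rw [← RingHom.mem_ker]
      refine Ideal.span_le.mpr ?_ hf
      rintro p hp
      rcases hp with rfl | rfl <;>
        simp [RingHom.mem_ker, ha, hb])

/-- The Lagrange interpolant `λ_{a,b} ∈ R'_q`. -/
def lag (q n : ℕ) (a b : ZMod q) : Rq q n :=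
  Ideal.Quotient.mk _ (MvPolynomial.C (((n : ZMod q) ^ 2)⁻¹) *
    ∑ i ∈ Finset.range n, ∑ j ∈ Finset.range n,
      MvPolynomial.C (a⁻¹ ^ i * b⁻¹ ^ j) * (X 0 ^ i * X 1 ^ j))

/-- The set `E` of points `(a,b)` with `a^n = b^n = 1`, as a finset. -/
def Efin (q n : ℕ) [NeZero q] : Finset (ZMod q × ZMod q) :=
  Finset.univ.filter fun p => p.1 ^ n = 1 ∧ p.2 ^ n = 1

/-- Evaluation at an arbitrary point of `(ℤ/qℤ)²` (zero outside `E`). -/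
def evAt (q n : ℕ) (p : ZMod q × ZMod q) (f : Rq q n) : ZMod q :=
  if h : p.1 ^ n = 1 ∧ p.2 ^ n = 1 then ev q n p.1 p.2 h.1 h.2 f else 0

/-- Componentwise evaluation of a quaternion of `𝔸_q` at a point of `E`. -/
def qevAt (q n : ℕ) (p : ZMod q × ZMod q) (F : ℍ[Rq q n, 1, 1]) : ℍ[ZMod q, 1, 1] :=
  ⟨evAt q n p F.re, evAt q n p F.imI, evAt q n p F.imJ, evAt q n p F.imK⟩

/-- The central (scalar) quaternion attached to `s ∈ R'_q`. -/
def cen (q n : ℕ) (s : Rq q n) : ℍ[Rq q n, 1, 1] :=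
  algebraMap (Rq q n) ℍ[Rq q n, 1, 1] s

/-- A quaternion over `ℤ/qℤ` regarded as a constant quaternion of `𝔸_q`. -/
def constQ (q n : ℕ) (w : ℍ[ZMod q, 1, 1]) : ℍ[Rq q n, 1, 1] :=
  ⟨Ideal.Quotient.mk _ (MvPolynomial.C w.re), Ideal.Quotient.mk _ (MvPolynomial.C w.imI),
   Ideal.Quotient.mk _ (MvPolynomial.C w.imJ), Ideal.Quotient.mk _ (MvPolynomial.C w.imK)⟩

/-- The Hamming weight of `ρ(F)`: the number of nonzero components, over all points of `E`,
among the four quaternion components of the evaluation of `F`. -/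
def hw (q n : ℕ) [NeZero q] (F : ℍ[Rq q n, 1, 1]) : ℕ :=
  ∑ p ∈ Efin q n,
    ((if (qevAt q n p F).re ≠ 0 then 1 else 0) +
     (if (qevAt q n p F).imI ≠ 0 then 1 else 0) +
     (if (qevAt q n p F).imJ ≠ 0 then 1 else 0) +
     (if (qevAt q n p F).imK ≠ 0 then 1 else 0))

theorem ZMod.exists_isPrimitiveRoot_of_dvd {q n : ℕ} [Fact q.Prime] (hn : n ∣ q - 1) :
    ∃ ζ : ZMod q, IsPrimitiveRoot ζ n := by
  obtain ⟨g, hg⟩ := IsCyclic.exists_ofOrder_eq_natCard (α := (ZMod q)ˣ)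
  rw [Nat.card_eq_fintype_card, ZMod.card_units_eq_totient,
    Nat.totient_prime Fact.out] at hg
  obtain ⟨m, hm⟩ := hn
  have hpos : 0 < q - 1 := Nat.sub_pos_of_lt (Fact.out : q.Prime).one_lt
  have hgp : IsPrimitiveRoot g (q - 1) := hg ▸ IsPrimitiveRoot.orderOf g
  exact ⟨_, IsPrimitiveRoot.coe_units_iff.mpr (hgp.pow hpos (hm.trans (mul_comm n m)))⟩

theorem ZMod.natCast_ne_zero_of_dvd_sub_one {q n : ℕ} [Fact q.Prime] (hn : n ∣ q - 1)
    (hnpos : 0 < n) : (n : ZMod q) ≠ 0 := by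
  have hq := (Fact.out : q.Prime).one_lt
  rw [Ne, ZMod.natCast_eq_zero_iff]
  intro h
  have := Nat.le_of_dvd hnpos h
  have := Nat.le_of_dvd (Nat.sub_pos_of_lt hq) hn
  omega

/-- An element of `R'_q` vanishing at every point of `E` is zero. -/
theorem Rq.eq_zero_of_evAt_eq_zero {q n : ℕ} [Fact q.Prime] (hn : n ∣ q - 1) (hnpos : 0 < n)
    (f : Rq q n) (hf : ∀ p ∈ Efin q n, evAt q n p f = 0) : f = 0 := by
  obtain ⟨ζ, hζ⟩ := ZMod.exists_isPrimitiveRoot_of_dvd hn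
  obtain ⟨P, rfl⟩ := Ideal.Quotient.mk_surjective f
  rw [Ideal.Quotient.eq_zero_iff_mem]
  obtain ⟨h, -, hP⟩ := combinatorial_nullstellensatz_exists_linearCombination
    (fun _ : Fin 2 => Polynomial.nthRootsFinset n (1 : ZMod q))
    (fun _ => ⟨1, by simp [Polynomial.mem_nthRootsFinset hnpos]⟩) P (by
      intro x hx
      simp only [Polynomial.mem_nthRootsFinset hnpos] at hx
      have h01 := hf (x 0, x 1) (by simp [Efin, hx])
      rw [evAt, dif_pos ⟨hx 0, hx 1⟩, ev, Ideal.Quotient.lift_mk] at h01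
      rwa [show ![x 0, x 1] = x from by ext i; fin_cases i <;> rfl] at h01)
  have hprod (i : Fin 2) : ∏ r ∈ Polynomial.nthRootsFinset n (1 : ZMod q),
      ((X i : MvPolynomial (Fin 2) (ZMod q)) - C r) = X i ^ n - 1 := by
    have := congrArg (Polynomial.aeval (X i : MvPolynomial (Fin 2) (ZMod q)))
      (Polynomial.X_pow_sub_one_eq_prod hnpos hζ)
    simpa [map_prod, MvPolynomial.algebraMap_eq] using this.symm
  rw [hP, Finsupp.linearCombination_apply, Finsupp.sum]
  refine Ideal.sum_mem _ fun i _ => Ideal.mul_mem_left _ _ (Ideal.subset_span ?_)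
  rw [hprod]
  fin_cases i <;> simp

section Evaluation

variable {q n : ℕ} {p : ZMod q × ZMod q}

theorem evAt_add (f g : Rq q n) : evAt q n p (f + g) = evAt q n p f + evAt q n p g := by
  unfold evAt; split_ifs <;> simp

theorem evAt_sub (f g : Rq q n) : evAt q n p (f - g) = evAt q n p f - evAt q n p g := by
  unfold evAt; split_ifs <;> simp

theorem evAt_mul (f g : Rq q n) : evAt q n p (f * g) = evAt q n p f * evAt q n p g := by
  unfold evAt; split_ifs <;> simp

theorem evAt_zero : evAt q n p 0 = 0 := by
  unfold evAt; split_ifs <;> simp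

theorem evAt_mk (hp : p.1 ^ n = 1 ∧ p.2 ^ n = 1) (P : MvPolynomial (Fin 2) (ZMod q)) :
    evAt q n p (Ideal.Quotient.mk _ P) = eval ![p.1, p.2] P := by
  rw [evAt, dif_pos hp, ev, Ideal.Quotient.lift_mk]

theorem evAt_smul (c : ZMod q) (f : Rq q n) : evAt q n p (c • f) = c * evAt q n p f := by
  obtain ⟨P, rfl⟩ := Ideal.Quotient.mk_surjective f
  by_cases hp : p.1 ^ n = 1 ∧ p.2 ^ n = 1
  · rw [← Ideal.Quotient.mkₐ_eq_mk (ZMod q), ← map_smul, Ideal.Quotient.mkₐ_eq_mk, evAt_mk hp,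
      evAt_mk hp, smul_eval]
  · simp [evAt, hp]

theorem evAt_sum {ι : Type*} (s : Finset ι) (f : ι → Rq q n) :
    evAt q n p (∑ i ∈ s, f i) = ∑ i ∈ s, evAt q n p (f i) :=
  map_sum (AddMonoidHom.mk' (evAt q n p) evAt_add) f s

theorem qevAt_add (A B : ℍ[Rq q n, 1, 1]) :
    qevAt q n p (A + B) = qevAt q n p A + qevAt q n p B := by
  ext <;> simp [qevAt, evAt_add]

theorem qevAt_mul (A B : ℍ[Rq q n, 1, 1]) :
    qevAt q n p (A * B) = qevAt q n p A * qevAt q n p B := by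
  ext <;> simp [qevAt, evAt_add, evAt_sub, evAt_mul]

theorem qevAt_constQ_mul_cen (hp : p.1 ^ n = 1 ∧ p.2 ^ n = 1) (W : ℍ[ZMod q, 1, 1])
    (s : Rq q n) : qevAt q n p (constQ q n W * cen q n s) = evAt q n p s • W := by
  rw [qevAt_mul]
  ext <;> simp [qevAt, constQ, cen, evAt_mk hp, evAt_zero, mul_comm,
    QuaternionAlgebra.algebraMap_eq]

end Evaluation

section Lagrange

variable {q n : ℕ} [Fact q.Prime]

theorem geom_sum_inv_mul_of_pow_eq_one {a b : ZMod q} (hnpos : 0 < n) (ha : a ^ n = 1)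
    (hb : b ^ n = 1) :
    ∑ i ∈ Finset.range n, a⁻¹ ^ i * b ^ i = if b = a then (n : ZMod q) else 0 := by
  have ha0 : a ≠ 0 := by rintro rfl; simp [hnpos.ne'] at ha
  simp_rw [← mul_pow]
  split_ifs with h
  · simp [h, ha0]
  · have hne : a⁻¹ * b ≠ 1 := fun h1 => h (by rw [inv_mul_eq_one₀ ha0] at h1; exact h1.symm)
    rw [geom_sum_eq hne, mul_pow, inv_pow, ha, hb]
    simp

theorem evAt_lag (hn : n ∣ q - 1) (hnpos : 0 < n) {p r : ZMod q × ZMod q}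
    (hp : p.1 ^ n = 1 ∧ p.2 ^ n = 1) (hr : r.1 ^ n = 1 ∧ r.2 ^ n = 1) :
    evAt q n p (lag q n r.1 r.2) = if p = r then 1 else 0 := by
  have hn0 := ZMod.natCast_ne_zero_of_dvd_sub_one hn hnpos
  have hsum : ∑ i ∈ Finset.range n, ∑ j ∈ Finset.range n,
      r.1⁻¹ ^ i * r.2⁻¹ ^ j * (p.1 ^ i * p.2 ^ j) =
      (∑ i ∈ Finset.range n, r.1⁻¹ ^ i * p.1 ^ i) *
        ∑ j ∈ Finset.range n, r.2⁻¹ ^ j * p.2 ^ j := by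
    rw [Finset.sum_mul_sum]
    exact Finset.sum_congr rfl fun i _ => Finset.sum_congr rfl fun j _ => by ring
  rw [lag, evAt_mk hp]
  simp only [map_mul, map_sum, map_pow, eval_C, eval_X, Matrix.cons_val_zero, Matrix.cons_val_one]
  rw [hsum, geom_sum_inv_mul_of_pow_eq_one hnpos hr.1 hp.1,
    geom_sum_inv_mul_of_pow_eq_one hnpos hr.2 hp.2]
  by_cases h1 : p.1 = r.1 <;> by_cases h2 : p.2 = r.2 <;> simp [Prod.ext_iff, h1, h2]
  field_simp

theorem evAt_sum_smul_lag (hn : n ∣ q - 1) (hnpos : 0 < n) {T : Finset (ZMod q × ZMod q)}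
    (hT : T ⊆ Efin q n) (c : ZMod q × ZMod q → ZMod q) {p : ZMod q × ZMod q}
    (hp : p.1 ^ n = 1 ∧ p.2 ^ n = 1) :
    evAt q n p (∑ r ∈ T, c r • lag q n r.1 r.2) = if p ∈ T then c p else 0 := by
  rw [evAt_sum, ← Finset.sum_ite_eq T p c]
  refine Finset.sum_congr rfl fun r hr => ?_
  have hrE : r.1 ^ n = 1 ∧ r.2 ^ n = 1 := by simpa [Efin] using hT hr
  rw [evAt_smul, evAt_lag hn hnpos hp hrE, mul_ite, mul_one, mul_zero]

end Lagrange

/-- The evaluation map `ρ` is injective. -/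
theorem eq_of_qevAt_eq {q n : ℕ} [Fact q.Prime] (hn : n ∣ q - 1) (hnpos : 0 < n)
    {A B : ℍ[Rq q n, 1, 1]} (h : ∀ p ∈ Efin q n, qevAt q n p A = qevAt q n p B) : A = B := by
  have key (f g : Rq q n) (hfg : ∀ p ∈ Efin q n, evAt q n p f = evAt q n p g) : f = g :=
    sub_eq_zero.mp <| Rq.eq_zero_of_evAt_eq_zero hn hnpos _ fun p hp => by
      rw [evAt_sub, hfg p hp, sub_self]
  ext
  · exact key _ _ fun p hp => congrArg (·.re) (h p hp)
  · exact key _ _ fun p hp => congrArg (·.imI) (h p hp)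
  · exact key _ _ fun p hp => congrArg (·.imJ) (h p hp)
  · exact key _ _ fun p hp => congrArg (·.imK) (h p hp)

/-- With the BQTRU setup (`σ = Σ_{(a,b)∈T} q_{a,b}·λ_{a,b}` with nonzero
coefficients, `W` a constant quaternion with all four components nonzero, `ϑ = W∘σ`,
`F∘F⁻¹ = F⁻¹∘F = 1 + α∘σ`, `G` vanishing on `T`, and `H̃ = F⁻¹∘G + ϑ`): if `τ' ≠ ϑ` and
there exist `F', α'` with `F∘F' = F'∘F = 1 + α'∘τ'` and `H̃ = F'∘G + τ'`, then the Hamming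
weight `‖ρ(τ')‖_H` is strictly greater than `4·|T|`. -/
theorem stmt4 (q n : ℕ) [Fact q.Prime] (hn : n ∣ q - 1) (hnpos : 0 < n)
    (T : Finset (ZMod q × ZMod q)) (hT : T ⊆ Efin q n)
    (c : ZMod q × ZMod q → ZMod q) (hc : ∀ p ∈ T, c p ≠ 0)
    (σ : Rq q n) (hσ : σ = ∑ p ∈ T, c p • lag q n p.1 p.2)
    (W : ℍ[ZMod q, 1, 1])
    (hW : W.re ≠ 0 ∧ W.imI ≠ 0 ∧ W.imJ ≠ 0 ∧ W.imK ≠ 0)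
    (ϑ : ℍ[Rq q n, 1, 1]) (hϑ : ϑ = constQ q n W * cen q n σ)
    (F Finv α G : ℍ[Rq q n, 1, 1])
    (hFinv1 : F * Finv = 1 + α * cen q n σ)
    (hFinv2 : Finv * F = 1 + α * cen q n σ)
    (hG : ∀ p ∈ T, qevAt q n p G = 0)
    (H : ℍ[Rq q n, 1, 1]) (hH : H = Finv * G + ϑ)
    (τ' : ℍ[Rq q n, 1, 1]) (hτ' : τ' ≠ ϑ)
    (F' α' : ℍ[Rq q n, 1, 1])
    (h1 : F * F' = 1 + α' * τ') (h2 : F' * F = 1 + α' * τ')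
    (h3 : H = F' * G + τ') :
    4 * T.card < hw q n τ' := by
  have hE {p} (hp : p ∈ Efin q n) : p.1 ^ n = 1 ∧ p.2 ^ n = 1 := by simpa [Efin] using hp
  have hϑE {p} (hp : p ∈ Efin q n) : qevAt q n p ϑ = (if p ∈ T then c p else 0) • W := by
    rw [hϑ, qevAt_constQ_mul_cen (hE hp), hσ, evAt_sum_smul_lag hn hnpos hT c (hE hp)]
  have hτT : ∀ p ∈ T, qevAt q n p τ' = qevAt q n p ϑ := fun p hp => by
    have := congrArg (qevAt q n p) (h3.symm.trans hH)
    simpa [qevAt_add, qevAt_mul, hG p hp] using this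
  obtain ⟨r, hr, hrne⟩ : ∃ p ∈ Efin q n, qevAt q n p τ' ≠ qevAt q n p ϑ := by
    by_contra! h
    exact hτ' (eq_of_qevAt_eq hn hnpos h)
  have hrT : r ∉ T := fun h => hrne (hτT r h)
  have hr0 : qevAt q n r τ' ≠ 0 := by simpa [hϑE hr, hrT] using hrne
  rw [hw, ← Finset.sum_sdiff hT, mul_comm, ← smul_eq_mul, ← Finset.sum_const]
  refine lt_add_of_pos_of_le (Finset.sum_pos' (fun _ _ => Nat.zero_le _)
    ⟨r, Finset.mem_sdiff.mpr ⟨hr, hrT⟩, ?_⟩) (Finset.sum_le_sum fun p hp => ?_)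
  · contrapose! hr0
    ext <;> by_contra hne <;> simp_all
  · obtain ⟨hW0, hW1, hW2, hW3⟩ := hW
    simp [hτT p hp, hϑE (hT hp), hp, hc p hp, hW0, hW1, hW2, hW3]
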